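/- arXiv:2006.01498 — 2 statements merged into one kernel-verified Lean document; each statement's English description precedes it below -/
import Mathlib

section
/- First-order corner (compatibility) conditions (Lemma 3.4): let p ∈ ℝ⁴. Assume K_ij = K_ji and Γ_ijb = −Γ_ibj identically on ℝ⁴, and that (E-K) and (E-Γ) hold at p. Suppose that at p one has K_A3 = 0 and Γ_A3B = 0 for all A, B ∈ {1,2}, and that the tangential derivatives vanish at p: e_0 K_A3 = 0, e_B K_A3 = 0, e_0 Γ_A3B = 0 and e_C Γ_A3B = 0 for all A, B, C ∈ {1,2}. Then at p: (i) Σ_B e_3 Γ_BAB = Σ_B e_B Γ_3AB − Σ_{b,C} Γ_bbC Γ_3AC for each A ∈ {1,2} (b summed over {1,2,3}, B, C over {1,2}); (ii) e_3 K_22 = −2 Σ_C Γ_31C K_1C; (iii) e_3 K_11 = −2 Σ_C Γ_32C K_2C; (iv) e_3 K_12 = Σ_C Γ_31C K_2C + Σ_C Γ_32C K_1C, where C is summed over {1,2}. -/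
open scoped BigOperators

noncomputable section

/-- Points of `ℝ⁴ = ℝ_t × ℝ³`; coordinate `0` is time. -/
abbrev Pt : Type := Fin 4 → ℝ

/-- Coordinate partial derivative `∂_μ u`. -/
def pd (μ : Fin 4) (u : Pt → ℝ) (p : Pt) : ℝ := fderiv ℝ u p (Pi.single μ 1)

/-- Frame derivative `e_i u = Σ_j f_i^j ∂_j u` along the spatial frame `f`. -/
def fr (f : Fin 3 → Fin 3 → Pt → ℝ) (i : Fin 3) (u : Pt → ℝ) (p : Pt) : ℝ :=
  ∑ j : Fin 3, f i j p * pd j.succ u p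

/-- `tr K = Σ_c K_cc`. -/
def trK (K : Fin 3 → Fin 3 → Pt → ℝ) (p : Pt) : ℝ := ∑ c : Fin 3, K c c p

/-- `|K|² = Σ_{i,j} (K_ij)²`. -/
def nK2 (K : Fin 3 → Fin 3 → Pt → ℝ) (p : Pt) : ℝ :=
  ∑ i : Fin 3, ∑ j : Fin 3, (K i j p) ^ 2

/-- `|Γ|² = Σ_{i,j,b} (Γ_ijb)²`. -/
def nG2 (G : Fin 3 → Fin 3 → Fin 3 → Pt → ℝ) (p : Pt) : ℝ :=
  ∑ i : Fin 3, ∑ j : Fin 3, ∑ b : Fin 3, (G i j b p) ^ 2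

/-- Kronecker delta. -/
def kd (i j : Fin 3) : ℝ := if i = j then 1 else 0

/-- The modified evolution equation (E-K) for `K_ij` at the point `p`. -/
def EK (f K : Fin 3 → Fin 3 → Pt → ℝ) (G : Fin 3 → Fin 3 → Fin 3 → Pt → ℝ)
    (i j : Fin 3) (p : Pt) : Prop :=
  pd 0 (K i j) p + trK K p * K i j p =
    (1 / 2) * ( fr f i (fun q => ∑ b : Fin 3, G b j b q) p
      - (∑ b : Fin 3, fr f b (G i j b) p)
      + (∑ b : Fin 3, ∑ c : Fin 3, G b i c p * G c j b p)
      + (∑ b : Fin 3, ∑ c : Fin 3, G b b c p * G i j c p)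
      + fr f j (fun q => ∑ b : Fin 3, G b i b q) p
      - (∑ b : Fin 3, fr f b (G j i b) p)
      + (∑ b : Fin 3, ∑ c : Fin 3, G b j c p * G c i b p)
      + (∑ b : Fin 3, ∑ c : Fin 3, G b b c p * G j i c p) )
    - (1 / 2) * kd i j *
      ( 2 * (∑ a : Fin 3, fr f a (fun q => ∑ b : Fin 3, G b a b q) p)
      + (∑ b : Fin 3, ∑ a : Fin 3, ∑ c : Fin 3, G b a c p * G c a b p)
      + (∑ c : Fin 3, (∑ b : Fin 3, G b b c p) * (∑ a : Fin 3, G a a c p))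
      + nK2 K p - (trK K p) ^ 2 )

/-- The unmodified evolution equation (E-K₀) for `K_ij` at the point `p`. -/
def EK0 (f K : Fin 3 → Fin 3 → Pt → ℝ) (G : Fin 3 → Fin 3 → Fin 3 → Pt → ℝ)
    (i j : Fin 3) (p : Pt) : Prop :=
  pd 0 (K i j) p + trK K p * K i j p =
    (1 / 2) * ( fr f i (fun q => ∑ b : Fin 3, G b j b q) p
      - (∑ b : Fin 3, fr f b (G i j b) p)
      + (∑ b : Fin 3, ∑ c : Fin 3, G b i c p * G c j b p)
      + (∑ b : Fin 3, ∑ c : Fin 3, G b b c p * G i j c p)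
      + fr f j (fun q => ∑ b : Fin 3, G b i b q) p
      - (∑ b : Fin 3, fr f b (G j i b) p)
      + (∑ b : Fin 3, ∑ c : Fin 3, G b j c p * G c i b p)
      + (∑ b : Fin 3, ∑ c : Fin 3, G b b c p * G j i c p) )

/-- The modified evolution equation (E-Γ) for `Γ_ijb` at the point `p`. -/
def EG (f K : Fin 3 → Fin 3 → Pt → ℝ) (G : Fin 3 → Fin 3 → Fin 3 → Pt → ℝ)
    (i j b : Fin 3) (p : Pt) : Prop :=
  pd 0 (G i j b) p + (∑ c : Fin 3, K i c p * G c j b p) =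
    fr f j (K b i) p - fr f b (K j i) p
    - (∑ c : Fin 3, G j b c p * K c i p) - (∑ c : Fin 3, G j i c p * K b c p)
    + (∑ c : Fin 3, G b j c p * K c i p) + (∑ c : Fin 3, G b i c p * K j c p)
    + kd i b * ( (∑ c : Fin 3, fr f c (K c j) p)
      - (∑ c : Fin 3, ∑ l : Fin 3, G c c l p * K l j p)
      - (∑ c : Fin 3, ∑ l : Fin 3, G c j l p * K c l p)
      - fr f j (trK K) p )
    - kd i j * ( (∑ c : Fin 3, fr f c (K c b) p)
      - (∑ c : Fin 3, ∑ l : Fin 3, G c c l p * K l b p)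
      - (∑ c : Fin 3, ∑ l : Fin 3, G c b l p * K c l p)
      - fr f b (trK K) p )

/-- The unmodified evolution equation (E-Γ₀) for `Γ_ijb` at the point `p`. -/
def EG0 (f K : Fin 3 → Fin 3 → Pt → ℝ) (G : Fin 3 → Fin 3 → Fin 3 → Pt → ℝ)
    (i j b : Fin 3) (p : Pt) : Prop :=
  pd 0 (G i j b) p + (∑ c : Fin 3, K i c p * G c j b p) =
    fr f j (K b i) p - fr f b (K j i) p
    - (∑ c : Fin 3, G j b c p * K c i p) - (∑ c : Fin 3, G j i c p * K b c p)
    + (∑ c : Fin 3, G b j c p * K c i p) + (∑ c : Fin 3, G b i c p * K j c p)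

/-- The frame evolution equation (E-f) at every point. -/
def Ef (f K : Fin 3 → Fin 3 → Pt → ℝ) : Prop :=
  ∀ (i j : Fin 3) (p : Pt), pd 0 (f i j) p + (∑ c : Fin 3, K i c p * f c j p) = 0

/-- The inverse frame evolution equation (E-f⁻¹) at every point. -/
def Efi (fi K : Fin 3 → Fin 3 → Pt → ℝ) : Prop :=
  ∀ (b j : Fin 3) (p : Pt), pd 0 (fi b j) p - (∑ c : Fin 3, K c b p * fi c j p) = 0

/-- Torsion components `C_ijb = Σ_l f^b_l (e_i f_j^l − e_j f_i^l) − Γ_ijb + Γ_jib`. -/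
def Tor (f fi : Fin 3 → Fin 3 → Pt → ℝ) (G : Fin 3 → Fin 3 → Fin 3 → Pt → ℝ)
    (i j b : Fin 3) (p : Pt) : ℝ :=
  (∑ l : Fin 3, fi b l p * (fr f i (f j l) p - fr f j (f i l) p)) - G i j b p + G j i b p

/-- Spatial covariant derivative `D̃_j K_bi = e_j K_bi − Σ_l Γ_jbl K_li − Σ_l Γ_jil K_bl`. -/
def DtK (f K : Fin 3 → Fin 3 → Pt → ℝ) (G : Fin 3 → Fin 3 → Fin 3 → Pt → ℝ)
    (j b i : Fin 3) (p : Pt) : ℝ :=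
  fr f j (K b i) p - (∑ l : Fin 3, G j b l p * K l i p) - (∑ l : Fin 3, G j i l p * K b l p)

/-- `R̂_b0 = Σ_i D̃_i K_bi − e_b (tr K)`. -/
def Rb0 (f K : Fin 3 → Fin 3 → Pt → ℝ) (G : Fin 3 → Fin 3 → Fin 3 → Pt → ℝ)
    (b : Fin 3) (p : Pt) : ℝ :=
  (∑ i : Fin 3, DtK f K G i b i p) - fr f b (trK K) p

/-- Modified spatial curvature `R̂_aijb`. -/
def Rhat (f : Fin 3 → Fin 3 → Pt → ℝ) (G : Fin 3 → Fin 3 → Fin 3 → Pt → ℝ)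
    (a i j b : Fin 3) (p : Pt) : ℝ :=
  fr f a (G i j b) p - fr f i (G a j b) p
  - (∑ c : Fin 3, G a b c p * G i j c p)
  + (∑ c : Fin 3, G i b c p * G a j c p)
  - (∑ c : Fin 3, (G a i c p - G i a c p) * G c j b p)

/-- Modified spatial Ricci contraction `r̂_ij = Σ_b R̂_bijb`. -/
def rhat (f : Fin 3 → Fin 3 → Pt → ℝ) (G : Fin 3 → Fin 3 → Fin 3 → Pt → ℝ)
    (i j : Fin 3) (p : Pt) : ℝ :=
  ∑ b : Fin 3, Rhat f G b i j b p

/-- Spatial covariant derivative of the torsion, `D̃_j C_aib`. -/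
def DtC (f fi : Fin 3 → Fin 3 → Pt → ℝ) (G : Fin 3 → Fin 3 → Fin 3 → Pt → ℝ)
    (j a i b : Fin 3) (p : Pt) : ℝ :=
  fr f j (Tor f fi G a i b) p
  - (∑ l : Fin 3, G j a l p * Tor f fi G l i b p)
  - (∑ l : Fin 3, G j i l p * Tor f fi G a l b p)
  - (∑ l : Fin 3, G j b l p * Tor f fi G a i l p)

theorem pd_sum3 (μ : Fin 4) (u : Fin 3 → Pt → ℝ) (hu : ∀ i, ContDiff ℝ (⊤ : ℕ∞) (u i)) (p : Pt) :
    pd μ (fun q => ∑ i, u i q) p = ∑ i, pd μ (u i) p := by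
  unfold pd
  rw [fderiv_fun_sum (fun i _ => ((hu i).differentiable (by simp)) p)]
  simp

theorem fr_sum3 (f : Fin 3 → Fin 3 → Pt → ℝ) (a : Fin 3) (u : Fin 3 → Pt → ℝ)
    (hu : ∀ i, ContDiff ℝ (⊤ : ℕ∞) (u i)) (p : Pt) :
    fr f a (fun q => ∑ i, u i q) p = ∑ i, fr f a (u i) p := by
  unfold fr
  simp only [pd_sum3 _ u hu, Finset.mul_sum]
  rw [Finset.sum_comm]

theorem fr_anti (f : Fin 3 → Fin 3 → Pt → ℝ) (a : Fin 3) (u v : Pt → ℝ)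
    (h : ∀ q, u q = - v q) (p : Pt) : fr f a u p = - fr f a v p := by
  have : u = fun q => - v q := funext h
  subst this
  simp [fr, pd, fderiv_fun_neg, Finset.sum_neg_distrib]

/-- Lemma 3.4: first-order corner (compatibility) conditions.
Indices `1,2` of `{1,2,3}` are `(0 : Fin 3)`, `(1 : Fin 3)`; index `3` is `(2 : Fin 3)`;
indices ranging over `{1,2}` are encoded by `Fin 2` via `Fin.castSucc`. -/
theorem corner_conditions
    (f K : Fin 3 → Fin 3 → Pt → ℝ) (G : Fin 3 → Fin 3 → Fin 3 → Pt → ℝ)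
    (hf : ∀ i j, ContDiff ℝ (⊤ : ℕ∞) (f i j))
    (hK : ∀ i j, ContDiff ℝ (⊤ : ℕ∞) (K i j)) (hG : ∀ i j b, ContDiff ℝ (⊤ : ℕ∞) (G i j b))
    (p : Pt)
    (hKsym : ∀ (i j : Fin 3) (q : Pt), K i j q = K j i q)
    (hGanti : ∀ (i j b : Fin 3) (q : Pt), G i j b q = - G i b j q)
    (hEK : ∀ i j : Fin 3, EK f K G i j p)
    (hEG : ∀ i j b : Fin 3, EG f K G i j b p)
    (hbK : ∀ A : Fin 2, K A.castSucc 2 p = 0)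
    (hbG : ∀ A B : Fin 2, G A.castSucc 2 B.castSucc p = 0)
    (htK0 : ∀ A : Fin 2, pd 0 (K A.castSucc 2) p = 0)
    (htK : ∀ A B : Fin 2, fr f B.castSucc (K A.castSucc 2) p = 0)
    (htG0 : ∀ A B : Fin 2, pd 0 (G A.castSucc 2 B.castSucc) p = 0)
    (htG : ∀ A B C : Fin 2, fr f C.castSucc (G A.castSucc 2 B.castSucc) p = 0) :
    (∀ A : Fin 2,
      (∑ B : Fin 2, fr f 2 (G B.castSucc A.castSucc B.castSucc) p)
        = (∑ B : Fin 2, fr f B.castSucc (G 2 A.castSucc B.castSucc) p)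
          - (∑ b : Fin 3, ∑ C : Fin 2, G b b C.castSucc p * G 2 A.castSucc C.castSucc p))
    ∧ fr f 2 (K 1 1) p
        = -2 * (∑ C : Fin 2, G 2 0 C.castSucc p * K 0 C.castSucc p)
    ∧ fr f 2 (K 0 0) p
        = -2 * (∑ C : Fin 2, G 2 1 C.castSucc p * K 1 C.castSucc p)
    ∧ fr f 2 (K 0 1) p
        = (∑ C : Fin 2, G 2 0 C.castSucc p * K 1 C.castSucc p)
          + (∑ C : Fin 2, G 2 1 C.castSucc p * K 0 C.castSucc p) := by
  have dK : ∀ a i j, fr f a (K i j) p = fr f a (K j i) p := fun a i j => by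
    rw [show K i j = K j i from funext (hKsym i j)]
  have dG : ∀ a i j b, fr f a (G i j b) p = - fr f a (G i b j) p := fun a i j b =>
    fr_anti f a _ _ (hGanti i j b) p
  have dG0 : ∀ a i j, fr f a (G i j j) p = 0 := fun a i j => by linarith [dG a i j j]
  have G0 : ∀ i j, G i j j p = 0 := fun i j => by linarith [hGanti i j j p]
  have sG : ∀ a j, fr f a (fun q => ∑ b : Fin 3, G b j b q) p = ∑ b : Fin 3, fr f a (G b j b) p :=
    fun a j => fr_sum3 f a (fun b => G b j b) (fun b => hG b j b) p
  have sK : ∀ a, fr f a (trK K) p = ∑ b : Fin 3, fr f a (K b b) p :=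
    fun a => fr_sum3 f a (fun b => K b b) (fun b => hK b b) p
  have g10 : ∀ i, G i 1 0 p = - G i 0 1 p := fun i => hGanti i 1 0 p
  have g20 : ∀ i, G i 2 0 p = - G i 0 2 p := fun i => hGanti i 2 0 p
  have g21 : ∀ i, G i 2 1 p = - G i 1 2 p := fun i => hGanti i 2 1 p
  have d10 : ∀ a i, fr f a (G i 1 0) p = - fr f a (G i 0 1) p := fun a i => dG a i 1 0
  have d20 : ∀ a i, fr f a (G i 2 0) p = - fr f a (G i 0 2) p := fun a i => dG a i 2 0
  have d21 : ∀ a i, fr f a (G i 2 1) p = - fr f a (G i 1 2) p := fun a i => dG a i 2 1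
  have k10 : K 1 0 p = K 0 1 p := hKsym 1 0 p
  have k20 : K 2 0 p = K 0 2 p := hKsym 2 0 p
  have k21 : K 2 1 p = K 1 2 p := hKsym 2 1 p
  have e10 : ∀ a, fr f a (K 1 0) p = fr f a (K 0 1) p := fun a => dK a 1 0
  have e20 : ∀ a, fr f a (K 2 0) p = fr f a (K 0 2) p := fun a => dK a 2 0
  have e21 : ∀ a, fr f a (K 2 1) p = fr f a (K 1 2) p := fun a => dK a 2 1
  have c0 : (0 : Fin 2).castSucc = (0 : Fin 3) := rfl
  have c1 : (1 : Fin 2).castSucc = (1 : Fin 3) := rfl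
  simp only [Fin.forall_fin_two, c0, c1, g20, g21, d20, d21, neg_eq_zero] at hbK hbG htK0 htK htG0 htG
  obtain ⟨b0, b1⟩ := hbK
  obtain ⟨⟨b00, b01⟩, b10, b11⟩ := hbG
  obtain ⟨t0, t1⟩ := htK0
  obtain ⟨⟨t00, t01⟩, t10, t11⟩ := htK
  obtain ⟨⟨s00, s01⟩, s10, s11⟩ := htG0
  obtain ⟨⟨⟨r000, r001⟩, r010, r011⟩, ⟨r100, r101⟩, r110, r111⟩ := htG
  have A0 := hEK 0 2
  have A1 := hEK 1 2
  have B00 := hEG 0 2 0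
  have B01 := hEG 0 2 1
  have B10 := hEG 1 2 0
  have B11 := hEG 1 2 1
  have q01 : kd 0 1 = 0 := by simp [kd]
  have q10 : kd 1 0 = 0 := by simp [kd]
  have q02 : kd 0 2 = 0 := by simp [kd]
  have q12 : kd 1 2 = 0 := by simp [kd]
  have q00 : kd 0 0 = 1 := by simp [kd]
  have q11 : kd 1 1 = 1 := by simp [kd]
  unfold EK at A0 A1
  unfold EG at B00 B01 B10 B11
  simp only [sG] at A0 A1
  simp only [Fin.forall_fin_two, c0, c1, Fin.sum_univ_two, Fin.sum_univ_three, sG, sK,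
    g10, g20, g21, d10, d20, d21, G0, dG0, k10, k20, k21, e10, e20, e21, q00, q01, q10, q11,
    q02, q12, b0, b1, b00, b01, b10, b11, t0, t1, t00, t01, t10, t11, s00, s01, s10, s11,
    r000, r001, r010, r011, r100, r101, r110, r111] at A0 A1 B00 B01 B10 B11 ⊢
  refine ⟨⟨?_, ?_⟩, ?_, ?_, ?_⟩
  · linarith
  · linarith
  · linarith
  · linarith
  · linarith
end
end

section
/- Propagation equation for the torsion (equation (e0Cijb) of Lemma 4.4): assume K_ij = K_ji and Γ_ijb = −Γ_ibj identically on ℝ⁴, and that (E-f), (E-f⁻¹) and (E-Γ) hold at every point of ℝ⁴. Then for all i, j, b ∈ {1,2,3}: ∂_t C_ijb = Σ_l [ K_bl C_ijl − K_il C_ljb − K_jl C_ilb ] − δ_ib R̂_j0 + δ_jb R̂_i0 at every point of ℝ⁴. -/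
open scoped BigOperators

noncomputable section

lemma pd_add' {u v : Pt → ℝ} (hu : ContDiff ℝ (⊤ : ℕ∞) u) (hv : ContDiff ℝ (⊤ : ℕ∞) v)
    (μ : Fin 4) (p : Pt) : pd μ (fun q => u q + v q) p = pd μ u p + pd μ v p := by
  have h1 := (hu.differentiable (by simp)) p
  have h2 := (hv.differentiable (by simp)) p
  unfold pd
  rw [fderiv_fun_add h1 h2]; rfl

lemma pd_sub' {u v : Pt → ℝ} (hu : ContDiff ℝ (⊤ : ℕ∞) u) (hv : ContDiff ℝ (⊤ : ℕ∞) v)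
    (μ : Fin 4) (p : Pt) : pd μ (fun q => u q - v q) p = pd μ u p - pd μ v p := by
  have h1 := (hu.differentiable (by simp)) p
  have h2 := (hv.differentiable (by simp)) p
  unfold pd
  rw [fderiv_fun_sub h1 h2]; rfl

lemma pd_neg' (u : Pt → ℝ) (μ : Fin 4) (p : Pt) : pd μ (fun q => - u q) p = - pd μ u p := by
  unfold pd
  rw [fderiv_fun_neg]; rfl

lemma pd_mul' {u v : Pt → ℝ} (hu : ContDiff ℝ (⊤ : ℕ∞) u) (hv : ContDiff ℝ (⊤ : ℕ∞) v)
    (μ : Fin 4) (p : Pt) : pd μ (fun q => u q * v q) p = u p * pd μ v p + v p * pd μ u p := by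
  have h1 := (hu.differentiable (by simp)) p
  have h2 := (hv.differentiable (by simp)) p
  unfold pd
  rw [fderiv_fun_mul h1 h2]; simp

lemma pd_sum' {u : Fin 3 → Pt → ℝ} (hu : ∀ i, ContDiff ℝ (⊤ : ℕ∞) (u i))
    (μ : Fin 4) (p : Pt) : pd μ (fun q => ∑ i, u i q) p = ∑ i, pd μ (u i) p := by
  unfold pd
  rw [fderiv_fun_sum (fun i _ => ((hu i).differentiable (by simp)) p)]; simp

lemma pd_smooth {u : Pt → ℝ} (hu : ContDiff ℝ (⊤ : ℕ∞) u) (μ : Fin 4) :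
    ContDiff ℝ (⊤ : ℕ∞) (pd μ u) := by
  unfold pd
  exact (hu.fderiv_right (m := (⊤ : ℕ∞)) (by simp)).clm_apply contDiff_const

lemma pd_comm {u : Pt → ℝ} (hu : ContDiff ℝ (⊤ : ℕ∞) u) (μ ν : Fin 4) (p : Pt) :
    pd μ (pd ν u) p = pd ν (pd μ u) p := by
  have hd : DifferentiableAt ℝ (fderiv ℝ u) p :=
    ((hu.fderiv_right (m := (⊤ : ℕ∞)) (by simp)).differentiable (by simp)) p
  have key : ∀ a b : Fin 4, pd a (pd b u) p
      = fderiv ℝ (fderiv ℝ u) p (Pi.single a 1) (Pi.single b 1) := by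
    intro a b
    unfold pd
    rw [fderiv_clm_apply hd (differentiableAt_const _)]
    simp
  rw [key, key]
  have hs : IsSymmSndFDerivAt ℝ u p :=
    hu.contDiffAt.isSymmSndFDerivAt
      (by simp only [minSmoothness_of_isRCLikeNormedField]; exact WithTop.coe_le_coe.2 (le_top : (2 : ℕ∞) ≤ ⊤))
  exact hs _ _

lemma fr_smooth {f : Fin 3 → Fin 3 → Pt → ℝ} (hf : ∀ i j, ContDiff ℝ (⊤ : ℕ∞) (f i j))
    (i : Fin 3) {u : Pt → ℝ} (hu : ContDiff ℝ (⊤ : ℕ∞) u) :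
    ContDiff ℝ (⊤ : ℕ∞) (fr f i u) := by
  unfold fr
  exact ContDiff.sum fun j _ => (hf i j).mul (pd_smooth hu _)

/-- The derivative `∂_t (e_i f_j^l)` when the frame evolves by (E-f). -/
lemma pd_fr {f K : Fin 3 → Fin 3 → Pt → ℝ} (hf : ∀ i j, ContDiff ℝ (⊤ : ℕ∞) (f i j))
    (hK : ∀ i j, ContDiff ℝ (⊤ : ℕ∞) (K i j)) (hEf : Ef f K) (i j l : Fin 3) (p : Pt) :
    pd 0 (fr f i (f j l)) p =
      ∑ c, (- K i c p * fr f c (f j l) p - f c l p * fr f i (K j c) p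
        - K j c p * fr f i (f c l) p) := by
  have e0 : ∀ a b, pd 0 (f a b) = fun q => - ∑ c, K a c q * f c b q := by
    intro a b; funext q; linarith [hEf a b q]
  have e1 : ∀ a b (m : Fin 4), pd m (pd 0 (f a b)) p
      = - ∑ c, (K a c p * pd m (f c b) p + f c b p * pd m (K a c) p) := by
    intro a b m
    rw [e0, pd_neg' (fun q => ∑ c, K a c q * f c b q),
      pd_sum' (u := fun c q => K a c q * f c b q) (fun c => (hK a c).mul (hf c b))]
    simp only [pd_mul' (hK _ _) (hf _ _)]
  have e2 : pd 0 (fr f i (f j l)) p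
      = ∑ m : Fin 3, (f i m p * pd 0 (pd m.succ (f j l)) p
          + pd m.succ (f j l) p * pd 0 (f i m) p) := by
    unfold fr
    rw [pd_sum' (u := fun m q => f i m q * pd (Fin.succ m) (f j l) q)
      (fun m => (hf i m).mul (pd_smooth (hf j l) _))]
    simp only [pd_mul' (hf _ _) (pd_smooth (hf j l) _)]
  rw [e2]
  simp only [pd_comm (hf j l) 0, e1]
  simp only [e0, fr, Fin.sum_univ_three]
  ring

/-- equation (e0Cijb) of Lemma 4.4: propagation equation for the torsion. -/
theorem torsion_propagation
    (f fi K : Fin 3 → Fin 3 → Pt → ℝ) (G : Fin 3 → Fin 3 → Fin 3 → Pt → ℝ)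
    (hf : ∀ i j, ContDiff ℝ (⊤ : ℕ∞) (f i j)) (hfi : ∀ i j, ContDiff ℝ (⊤ : ℕ∞) (fi i j))
    (hK : ∀ i j, ContDiff ℝ (⊤ : ℕ∞) (K i j)) (hG : ∀ i j b, ContDiff ℝ (⊤ : ℕ∞) (G i j b))
    (hinv1 : ∀ (i b : Fin 3) (p : Pt), (∑ j : Fin 3, f i j p * fi b j p) = kd i b)
    (hinv2 : ∀ (j i : Fin 3) (p : Pt), (∑ b : Fin 3, fi b j p * f b i p) = kd j i)
    (hKsym : ∀ (i j : Fin 3) (p : Pt), K i j p = K j i p)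
    (hGanti : ∀ (i j b : Fin 3) (p : Pt), G i j b p = - G i b j p)
    (hEf : Ef f K) (hEfi : Efi fi K)
    (hEG : ∀ (i j b : Fin 3) (p : Pt), EG f K G i j b p) :
    ∀ (i j b : Fin 3) (p : Pt),
      pd 0 (Tor f fi G i j b) p
        = (∑ l : Fin 3, (K b l p * Tor f fi G i j l p
            - K i l p * Tor f fi G l j b p
            - K j l p * Tor f fi G i l b p))
          - kd i b * Rb0 f K G j p + kd j b * Rb0 f K G i p := by
  intro i j b p
  have hKs : ∀ i j, K i j = K j i := fun i j => funext (hKsym i j)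
  have hA : ∀ i j l, ContDiff ℝ (⊤ : ℕ∞) (fun q => fr f i (f j l) q - fr f j (f i l) q) :=
    fun i j l => (fr_smooth hf i (hf j l)).sub (fr_smooth hf j (hf i l))
  have hT : pd 0 (Tor f fi G i j b) p
      = (∑ l, (fi b l p * (pd 0 (fr f i (f j l)) p - pd 0 (fr f j (f i l)) p)
          + (fr f i (f j l) p - fr f j (f i l) p) * pd 0 (fi b l) p))
        - pd 0 (G i j b) p + pd 0 (G j i b) p := by
    have hS : ContDiff ℝ (⊤ : ℕ∞)
        (fun q => ∑ l, fi b l q * (fr f i (f j l) q - fr f j (f i l) q)) :=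
      ContDiff.sum fun l _ => (hfi b l).mul (hA i j l)
    unfold Tor
    rw [pd_add' (hS.sub (hG i j b)) (hG j i b), pd_sub' hS (hG i j b),
      pd_sum' (u := fun l q => fi b l q * (fr f i (f j l) q - fr f j (f i l) q))
        (fun l => (hfi b l).mul (hA i j l))]
    simp only [pd_mul' (hfi _ _) (hA _ _ _),
      pd_sub' (fr_smooth hf _ (hf _ _)) (fr_smooth hf _ (hf _ _))]
  have hfi' : ∀ l, pd 0 (fi b l) p = ∑ c, K b c p * fi c l p := by
    intro l
    have := hEfi b l p
    simp only [hKs _ b] at this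
    linarith
  -- contraction of the inverse frame with the derivative of `K`
  have hcon : ∀ i j, ∑ l, fi b l p * ∑ c, f c l p * fr f i (K j c) p = fr f i (K j b) p := by
    intro i j
    have h : ∑ l, fi b l p * ∑ c, f c l p * fr f i (K j c) p
        = ∑ c, (∑ l, f c l p * fi b l p) * fr f i (K j c) p := by
      simp only [Fin.sum_univ_three]; ring
    rw [h]
    simp [hinv1, kd]
  have hR : ∀ j, Rb0 f K G j p = (∑ c : Fin 3, fr f c (K c j) p)
      - (∑ c : Fin 3, ∑ l : Fin 3, G c c l p * K l j p)
      - (∑ c : Fin 3, ∑ l : Fin 3, G c j l p * K c l p)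
      - fr f j (trK K) p := by
    intro j
    simp only [Rb0, DtK, Finset.sum_sub_distrib, hKs j]
    simp only [Fin.sum_univ_three, hKs 1 0, hKs 2 0, hKs 2 1]
    ring
  have h1 := hEG i j b p
  have h2 := hEG j i b p
  unfold EG at h1 h2
  simp only [← hR] at h1 h2
  have hkd : kd j i = kd i j := by simp [kd, eq_comm]
  have c1 := hcon i j
  have c2 := hcon j i
  rw [hT]
  simp only [pd_fr hf hK hEf, hfi', Tor]
  rw [hKs b i, hKs j i] at h1
  rw [hKs b j, hkd] at h2
  have s : ∀ x y w, ∑ c, G x y c p * K c w p = ∑ c, G x y c p * K w c p :=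
    fun x y w => by simp only [hKs w]
  rw [s j b i, s b j i] at h1
  rw [s i b j, s b i j] at h2
  have a1 : ∑ c, G j b c p * K i c p = - ∑ c, G j c b p * K i c p := by
    simp only [hGanti j b, neg_mul, Finset.sum_neg_distrib]
  have a2 : ∑ c, G i b c p * K j c p = - ∑ c, G i c b p * K j c p := by
    simp only [hGanti i b, neg_mul, Finset.sum_neg_distrib]
  rw [a1] at h1
  rw [a2] at h2
  simp only [Fin.sum_univ_three] at h1 h2 c1 c2 ⊢
  linear_combination h2 - h1 - c1 + c2
end
end
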